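/- There exists a constant c > 0 such that for every ε > 0 there exists N₀ with the following property: for every finite abelian group G of order N ≥ N₀, if S is a uniformly random subset of G, then the probability that S can be expressed as a union of at most ⌊c·N / ((log₂ N)² · log₂ log₂ N)⌋ restricted sumsets (i.e., S = (A₁+̂A₁) ∪ … ∪ (A_m+̂A_m) for some m ≤ ⌊c·N / ((log₂ N)² · log₂ log₂ N)⌋ and A₁,…,A_m ⊆ G) is at most ε. -/

import Mathlib

/-- The restricted sumset `A +̂ A = {a + b : a, b ∈ A, a ≠ b}`. -/
def rsumset {G : Type*} [AddCommGroup G] [DecidableEq G] (A : Finset G) : Finset G :=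
  ((A ×ˢ A).filter fun p => p.1 ≠ p.2).image fun p => p.1 + p.2

/-!
Write `N = #G`, `L ≈ log₂ N` and `l ≈ 2 log₂ log₂ N`. Every `A` with about `L * l` elements contains
some `B` that takes fewer bits to describe than the number of memberships which the condition
`rsumset B ⊆ S` imposes on a random set `S`. By a union bound over all such `B`, a random set
typically contains no `rsumset A` with `A` that large, and families of about `N / (L ^ 2 * l)`
smaller sets are too few to produce more than a negligible proportion of the `2 ^ N` subsets.

To find `B`, let `D` be a maximal subset of `A` whose sums of at most `l` elements are distinct.
Then `A` lies in the set of differences of such sums, so a subset `B` of `A` costs `L * #D` bits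
for `D` and `O(l ^ 2)` bits per element, and Plünnecke's inequality shows that `A + A` is large
compared to `#D`. If the doubling of `A` is at least `8 * l ^ 2`, then `B = A` works. Otherwise
most sums have many representations (after passing to at least half of `A`), and a random `B ⊆ A`
of density about `l ^ (-2)` still represents a constant proportion of them.
-/

open Finset Filter
open scoped BigOperators Pointwise

section Counting

lemma card_filter_powerset_card_le {α : Type*} (s : Finset α) (l : ℕ) :
    #{t ∈ s.powerset | #t ≤ l} ≤ (#s + 1) ^ l := by
  classical
  have hcover : {t ∈ s.powerset | #t ≤ l} ⊆ (range (l + 1)).biUnion fun i => s.powersetCard i := by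
    intro t ht
    simp only [mem_filter, mem_powerset] at ht
    simp only [mem_biUnion, mem_range, mem_powersetCard]
    exact ⟨#t, by omega, ht.1, rfl⟩
  calc #{t ∈ s.powerset | #t ≤ l}
      ≤ ∑ i ∈ range (l + 1), #(s.powersetCard i) := (card_le_card hcover).trans card_biUnion_le
    _ ≤ ∑ i ∈ range (l + 1), #s ^ i * 1 ^ (l - i) * l.choose i := by
        refine sum_le_sum fun i hi => ?_
        rw [card_powersetCard, one_pow, mul_one]
        exact (Nat.choose_le_pow _ _).trans
          (Nat.le_mul_of_pos_right _ (Nat.choose_pos (mem_range_succ_iff.1 hi)))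
    _ = (#s + 1) ^ l := (add_pow _ _ _).symm

lemma sum_powerset_pow_card_le_exp {α : Type*} (s : Finset α) {x : ℝ} (hx : 0 ≤ x) :
    ∑ t ∈ s.powerset, x ^ #t ≤ Real.exp (#s * x) := by
  have hsum : ∑ t ∈ s.powerset, x ^ #t = (x + 1) ^ #s := by
    simpa only [one_pow, mul_one] using Finset.sum_pow_mul_eq_add_pow x 1 s
  rw [hsum, Real.exp_nat_mul]
  exact pow_le_pow_left₀ (by linarith) (Real.add_one_le_exp x) _

lemma pow_le_two_mul_pow_mul_choose {l d : ℕ} (h : 2 * l ≤ d) :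
    d ^ l ≤ (2 * l) ^ l * d.choose l :=
  calc d ^ l ≤ (2 * (d + 1 - l)) ^ l := Nat.pow_le_pow_left (by omega) _
    _ = 2 ^ l * (d + 1 - l) ^ l := mul_pow _ _ _
    _ ≤ 2 ^ l * (l.factorial * d.choose l) := by
        rw [← Nat.descFactorial_eq_factorial_mul_choose]
        exact Nat.mul_le_mul_left _ (Nat.pow_sub_le_descFactorial d l)
    _ ≤ 2 ^ l * (l ^ l * d.choose l) := by gcongr; exact l.factorial_le_pow
    _ = (2 * l) ^ l * d.choose l := by rw [mul_pow, mul_assoc]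

lemma dens_filter_forall_mem {ι α : Type*} [Fintype ι] [DecidableEq ι] [Fintype α] [DecidableEq α]
    [Nonempty α] (R : Finset ι) (U : Finset α) :
    ({F : ι → α | ∀ i ∈ R, F i ∈ U} : Finset (ι → α)).dens = U.dens ^ #R := by
  have hpi : ({F : ι → α | ∀ i ∈ R, F i ∈ U} : Finset (ι → α))
      = Fintype.piFinset fun i => if i ∈ R then U else univ := by
    ext F
    simp only [mem_filter, mem_univ, true_and, Fintype.mem_piFinset]
    refine forall_congr' fun i => ?_
    by_cases hi : i ∈ R <;> simp [hi]
  calc ({F : ι → α | ∀ i ∈ R, F i ∈ U} : Finset (ι → α)).dens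
      = ∏ i, (if i ∈ R then U else univ).dens := by
        simp only [hpi, dens_eq_card_div_card, Fintype.card_piFinset, Fintype.card_pi,
          Nat.cast_prod, prod_div_distrib]
    _ = ∏ i, if i ∈ R then U.dens else 1 := by
        refine prod_congr rfl fun i _ => ?_
        split_ifs
        · rfl
        · exact dens_univ
    _ = U.dens ^ #R := by rw [prod_ite_mem, univ_inter, prod_const]

lemma dens_compl_singleton_pow_le {α : Type*} [Fintype α] [DecidableEq α] (a : α) {r : ℕ}
    (hr : 3 * Fintype.card α ≤ r) : ({a}ᶜ : Finset α).dens ^ r ≤ 1 / 4 := by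
  have hn : (0 : ℝ) < Fintype.card α := by exact_mod_cast Fintype.card_pos_iff.2 ⟨a⟩
  have hdens : ((({a}ᶜ : Finset α).dens : ℚ≥0) : ℝ) = 1 - 1 / Fintype.card α := by
    rw [nnratCast_dens, card_compl, card_singleton, Nat.cast_pred (Fintype.card_pos_iff.2 ⟨a⟩)]
    field_simp
  have hle : 1 - 1 / (Fintype.card α : ℝ) ≤ Real.exp (-(1 / Fintype.card α)) :=
    Real.one_sub_le_exp_neg _
  have hexp : (3 : ℝ) ≤ r * (1 / Fintype.card α) := by
    rw [mul_one_div, le_div_iff₀ hn]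
    exact_mod_cast hr
  have key : ((({a}ᶜ : Finset α).dens : ℚ≥0) : ℝ) ^ r ≤ 1 / 4 :=
    calc ((({a}ᶜ : Finset α).dens : ℚ≥0) : ℝ) ^ r
        ≤ Real.exp (-(1 / Fintype.card α)) ^ r :=
          pow_le_pow_left₀ (NNRat.cast_nonneg _) (hdens.trans_le hle) _
      _ = Real.exp (-(r * (1 / Fintype.card α))) := by rw [← Real.exp_nat_mul, mul_neg]
      _ ≤ Real.exp (-3) := Real.exp_le_exp.2 (neg_le_neg hexp)
      _ ≤ 1 / 4 := by
          rw [Real.exp_neg, one_div]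
          exact inv_anti₀ (by norm_num) (by linarith [Real.add_one_le_exp (3 : ℝ)])
  rw [← NNRat.cast_le (K := ℝ), NNRat.cast_pow]
  simpa only [NNRat.cast_div, NNRat.cast_one, NNRat.cast_ofNat] using key

lemma expect_card_filter_le {Ω α : Type*} [Fintype Ω] (s : Finset α) (P : Ω → α → Prop)
    [∀ w a, Decidable (P w a)] {p : ℚ≥0}
    (h : ∀ a ∈ s, ({w | P w a} : Finset Ω).dens ≤ p) :
    𝔼 w, (#{a ∈ s | P w a} : ℚ≥0) ≤ #s * p := by
  have hswap : ∑ w, #{a ∈ s | P w a} = ∑ a ∈ s, #{w | P w a} :=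
    sum_card_bipartiteAbove_eq_sum_card_bipartiteBelow P
  calc 𝔼 w, (#{a ∈ s | P w a} : ℚ≥0)
      = ∑ a ∈ s, ({w | P w a} : Finset Ω).dens := by
        rw [Fintype.expect_eq_sum_div_card, ← Nat.cast_sum, hswap, Nat.cast_sum, sum_div]
        rfl
    _ ≤ #s • p := sum_le_card_nsmul _ _ _ h
    _ = #s * p := nsmul_eq_mul _ _

end Counting

variable {G : Type*} [AddCommGroup G] [DecidableEq G]

section RestrictedSumset

lemma mem_rsumset {A : Finset G} {s : G} :
    s ∈ rsumset A ↔ ∃ a ∈ A, ∃ b ∈ A, a ≠ b ∧ a + b = s := by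
  simp only [rsumset, mem_image, mem_filter, mem_product, Prod.exists]
  tauto

lemma rsumset_mono {A B : Finset G} (h : A ⊆ B) : rsumset A ⊆ rsumset B :=
  image_subset_image (filter_subset_filter _ (product_subset_product h h))

lemma card_add_self_le_card_rsumset_add_card (A : Finset G) : #(A + A) ≤ #(rsumset A) + #A := by
  have hcover : A + A ⊆ rsumset A ∪ A.image fun a => a + a := by
    intro s hs
    obtain ⟨a, ha, b, hb, rfl⟩ := mem_add.1 hs
    rw [mem_union, mem_rsumset]
    rcases eq_or_ne a b with rfl | hab
    · exact Or.inr (mem_image_of_mem _ ha)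
    · exact Or.inl ⟨a, ha, b, hb, hab, rfl⟩
  calc #(A + A) ≤ #(rsumset A) + #(A.image fun a => a + a) :=
        (card_le_card hcover).trans (card_union_le _ _)
    _ ≤ #(rsumset A) + #A := Nat.add_le_add_left card_image_le _

end RestrictedSumset

section Dissociated

/-- A bounded version of `AddDissociated`: the subsets of `D` with at most `l` elements have
pairwise distinct sums. -/
def BddDissociated (l : ℕ) (D : Finset G) : Prop :=
  {I : Finset G | I ⊆ D ∧ #I ≤ l}.InjOn fun I => ∑ x ∈ I, x

/-- The differences of two sums of at most `l` elements of `D`. Adjoining `0` lets the `l`-fold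
sumset account for shorter sums. -/
def bddSpan (l : ℕ) (D : Finset G) : Finset G :=
  l • insert 0 D - l • insert 0 D

lemma card_bddSpan_le (l : ℕ) (D : Finset G) : #(bddSpan l D) ≤ (#D + 1) ^ (2 * l) := by
  have hfold : #(l • insert 0 D) ≤ (#D + 1) ^ l :=
    card_nsmul_le.trans (Nat.pow_le_pow_left (card_insert_le _ _) _)
  calc #(bddSpan l D) ≤ #(l • insert 0 D) * #(l • insert 0 D) := card_sub_le
    _ ≤ (#D + 1) ^ l * (#D + 1) ^ l := Nat.mul_le_mul hfold hfold
    _ = (#D + 1) ^ (2 * l) := by rw [two_mul, pow_add]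

lemma sum_mem_card_nsmul {I D : Finset G} (h : I ⊆ D) : ∑ x ∈ I, x ∈ #I • D := by
  have hmem := Set.finsetSum_mem_finsetSum I (fun _ => (D : Set G)) id fun _ hx => h hx
  rw [sum_const] at hmem
  exact_mod_cast hmem

lemma sum_sub_sum_mem_bddSpan {l : ℕ} {I J D : Finset G} (hI : I ⊆ D) (hIl : #I ≤ l)
    (hJ : J ⊆ D) (hJl : #J ≤ l) : ∑ x ∈ I, x - ∑ x ∈ J, x ∈ bddSpan l D := by
  have hfold {K : Finset G} (hK : K ⊆ D) (hKl : #K ≤ l) : ∑ x ∈ K, x ∈ l • insert 0 D :=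
    nsmul_subset_nsmul (subset_insert 0 D) (mem_insert_self 0 D) hKl (sum_mem_card_nsmul hK)
  exact sub_mem_sub (hfold hI hIl) (hfold hJ hJl)

lemma mem_bddSpan_of_sum_eq_sum {l : ℕ} {I J D : Finset G} {y : G}
    (hI : I ⊆ insert y D) (hIl : #I ≤ l) (hJ : J ⊆ insert y D) (hJl : #J ≤ l)
    (hyI : y ∈ I) (hyJ : y ∉ J) (hsum : ∑ x ∈ I, x = ∑ x ∈ J, x) : y ∈ bddSpan l D := by
  have hy : y = ∑ x ∈ J, x - ∑ x ∈ I.erase y, x := by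
    rw [← hsum, ← add_sum_erase I (fun x => x) hyI, add_sub_cancel_right]
  rw [hy]
  exact sum_sub_sum_mem_bddSpan ((subset_insert_iff_of_notMem hyJ).1 hJ) hJl
    (subset_insert_iff.1 hI) (card_erase_le.trans hIl)

lemma BddDissociated.insert {l : ℕ} {D : Finset G} {y : G} (hD : BddDissociated l D)
    (hy : y ∉ bddSpan l D) : BddDissociated l (insert y D) := by
  rintro I ⟨hI, hIl⟩ J ⟨hJ, hJl⟩ hsum
  by_cases hyI : y ∈ I <;> by_cases hyJ : y ∈ J
  · have herase : I.erase y = J.erase y := by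
      refine hD ⟨subset_insert_iff.1 hI, card_erase_le.trans hIl⟩
        ⟨subset_insert_iff.1 hJ, card_erase_le.trans hJl⟩ (add_left_cancel (a := y) ?_)
      simpa only [add_sum_erase _ (fun x => x) hyI, add_sum_erase _ (fun x => x) hyJ] using hsum
    rw [← insert_erase hyI, ← insert_erase hyJ, herase]
  · exact absurd (mem_bddSpan_of_sum_eq_sum hI hIl hJ hJl hyI hyJ hsum) hy
  · exact absurd (mem_bddSpan_of_sum_eq_sum hJ hJl hI hIl hyJ hyI hsum.symm) hy
  · exact hD ⟨(subset_insert_iff_of_notMem hyI).1 hI, hIl⟩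
      ⟨(subset_insert_iff_of_notMem hyJ).1 hJ, hJl⟩ hsum

lemma exists_bddDissociated_subset_bddSpan {l : ℕ} (hl : l ≠ 0) (A : Finset G) :
    ∃ D ⊆ A, BddDissociated l D ∧ A ⊆ bddSpan l D := by
  have hfin : {D | D ⊆ A ∧ BddDissociated l D}.Finite :=
    A.powerset.finite_toSet.subset fun D hD => mem_coe.2 (mem_powerset.2 hD.1)
  obtain ⟨D, ⟨hDA, hD⟩, hmax⟩ := hfin.exists_maximal
    ⟨∅, empty_subset A, fun I hI J hJ _ => by rw [subset_empty.1 hI.1, subset_empty.1 hJ.1]⟩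
  refine ⟨D, hDA, hD, fun y hy => by_contra fun hyspan => hyspan ?_⟩
  have hyD : y ∈ D := hmax ⟨insert_subset hy hDA, hD.insert hyspan⟩ (subset_insert y D)
    (mem_insert_self y D)
  simpa using sum_sub_sum_mem_bddSpan (singleton_subset_iff.2 hyD)
    (by simpa using Nat.one_le_iff_ne_zero.2 hl) (empty_subset D) (Nat.zero_le l)

lemma BddDissociated.choose_le_card_nsmul {l : ℕ} {D : Finset G} (hD : BddDissociated l D) :
    (#D).choose l ≤ #(l • D) := by
  rw [← card_powersetCard]
  refine card_le_card_of_injOn (fun I => ∑ x ∈ I, x) (fun I hI => ?_) (hD.mono fun I hI => ?_)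
  · obtain ⟨hID, rfl⟩ := mem_powersetCard.1 hI
    exact sum_mem_card_nsmul hID
  · obtain ⟨hID, hIl⟩ := mem_powersetCard.1 hI
    exact ⟨hID, hIl.le⟩

lemma card_nsmul_mul_card_pow_le {A : Finset G} (hA : A.Nonempty) (D : Finset G) (l : ℕ) :
    #(l • D) * #A ^ l ≤ #(A + D) ^ l * #A := by
  have hpos : (0 : ℚ≥0) < #A ^ l := by
    have := hA.card_pos
    positivity
  have hplunnecke := pluennecke_ruzsa_inequality_nsmul_add hA D l
  rw [div_pow, div_mul_eq_mul_div, le_div_iff₀ hpos] at hplunnecke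
  exact_mod_cast hplunnecke

-- A dissociated `D` has an `l`-fold sumset of size about `(#D / l) ^ l`, whereas Plünnecke's
-- inequality bounds it by `(#(A + D) / #A) ^ l * #A`; the factor `#A ≤ 2 ^ l` is harmless.
lemma BddDissociated.card_mul_card_le {l : ℕ} (hl : l ≠ 0) {A D : Finset G} (hAl : #A ≤ 2 ^ l)
    (hD : BddDissociated l D) : #D * #A ≤ 4 * l * #(A + D) := by
  rcases A.eq_empty_or_nonempty with rfl | hA
  · simp
  rcases D.eq_empty_or_nonempty with rfl | hDne
  · simp
  rcases le_total #D (2 * l) with hDl | hDl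
  · calc #D * #A ≤ 2 * l * #(A + D) := Nat.mul_le_mul hDl (card_le_card_add_right hDne)
      _ ≤ 4 * l * #(A + D) := by gcongr; norm_num
  refine le_of_pow_le_pow_left₀ hl (Nat.zero_le _) ?_
  calc (#D * #A) ^ l = #D ^ l * #A ^ l := mul_pow _ _ _
    _ ≤ (2 * l) ^ l * (#D).choose l * #A ^ l := by
        gcongr; exact pow_le_two_mul_pow_mul_choose hDl
    _ ≤ (2 * l) ^ l * #(l • D) * #A ^ l := by gcongr; exact hD.choose_le_card_nsmul
    _ = (2 * l) ^ l * (#(l • D) * #A ^ l) := mul_assoc _ _ _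
    _ ≤ (2 * l) ^ l * (#(A + D) ^ l * 2 ^ l) := by
        refine Nat.mul_le_mul_left _ ?_
        exact (card_nsmul_mul_card_pow_le hA D l).trans (Nat.mul_le_mul_left _ hAl)
    _ = (4 * l * #(A + D)) ^ l := by
        rw [← mul_pow, ← mul_pow]
        ring

end Dissociated

section Popular

/-- The elements of `A` occurring in a representation of `s` as a sum of two distinct elements of
`A`; each unordered representation is counted twice. -/
def distinctReps (A : Finset G) (s : G) : Finset G :=
  {a ∈ A | s - a ∈ A ∧ a ≠ s - a}

/-- The elements of `rsumset E` with more than `T` ordered representations. -/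
def popularSums (T : ℕ) (E : Finset G) : Finset G :=
  {s ∈ rsumset E | T < #(distinctReps E s)}

/-- The elements `b ≠ a` of `E` for which `a + b` has at most `T` ordered representations as a sum
of distinct elements of `E`. -/
def unpopularPartners (T : ℕ) (E : Finset G) (a : G) : Finset G :=
  {b ∈ E | b ≠ a ∧ #(distinctReps E (a + b)) ≤ T}

lemma mem_distinctReps_add {A : Finset G} {a b : G} (ha : a ∈ A) (hb : b ∈ A) (hab : a ≠ b) :
    a ∈ distinctReps A (a + b) := by
  simpa only [distinctReps, mem_filter, add_sub_cancel_left] using ⟨ha, hb, hab⟩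

lemma distinctReps_erase_subset (A : Finset G) (a s : G) :
    distinctReps (A.erase a) s ⊆ (distinctReps A s).erase a := by
  intro x hx
  simp only [distinctReps, mem_filter, mem_erase] at hx ⊢
  tauto

lemma sum_min_card_distinctReps_erase_add_le (T : ℕ) {E S : Finset G} {a : G} (ha : a ∈ E)
    (hS : E + E ⊆ S) :
    ∑ s ∈ S, min #(distinctReps (E.erase a) s) T + #(unpopularPartners T E a) ≤
      ∑ s ∈ S, min #(distinctReps E s) T := by
  have himage : (unpopularPartners T E a).image (a + ·) ⊆ S :=
    image_subset_iff.2 fun b hb => hS (add_mem_add ha (mem_filter.1 hb).1)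
  have hcard : #(unpopularPartners T E a) =
      ∑ s ∈ S, if s ∈ (unpopularPartners T E a).image (a + ·) then 1 else 0 := by
    rw [sum_boole, filter_mem_eq_inter, inter_eq_right.2 himage,
      card_image_of_injective _ (add_right_injective a), Nat.cast_id]
  rw [hcard, ← sum_add_distrib]
  refine sum_le_sum fun s _ => ?_
  have hle := card_le_card (distinctReps_erase_subset E a s)
  split_ifs with hs
  · obtain ⟨b, hb, rfl⟩ := mem_image.1 hs
    obtain ⟨hbE, hba, hbT⟩ := mem_filter.1 hb
    have haE := mem_distinctReps_add ha hbE hba.symm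
    have hpos := card_pos.2 ⟨a, haE⟩
    rw [card_erase_of_mem haE] at hle
    omega
  · have := card_erase_le (s := distinctReps E s) (a := a)
    omega

-- Maximise `β * #E` minus the truncated number of representations: deleting an element with more
-- than `β` unpopular partners would increase this quantity.
lemma exists_subset_card_unpopularPartners_le (A : Finset G) {T β : ℕ} (hβ : 0 < β)
    (h : 2 * T * #(A + A) ≤ β * #A) :
    ∃ E ⊆ A, #A ≤ 2 * #E ∧ ∀ a ∈ E, #(unpopularPartners T E a) ≤ β := by
  let φ : Finset G → ℕ := fun E => ∑ s ∈ A + A, min #(distinctReps E s) T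
  obtain ⟨E, hE, hmax⟩ := A.powerset.exists_max_image (fun E => (β * #E : ℤ) - φ E)
    ⟨A, mem_powerset_self A⟩
  rw [mem_powerset] at hE
  refine ⟨E, hE, ?_, fun a ha => ?_⟩
  · have hA := hmax A (mem_powerset_self A)
    have hφA : φ A ≤ #(A + A) * T := sum_le_card_nsmul _ _ _ fun s _ => min_le_right _ _
    refine Nat.le_of_mul_le_mul_left ?_ hβ
    zify at hφA h ⊢
    linarith
  · have hErase := hmax (E.erase a) (mem_powerset.2 ((erase_subset _ _).trans hE))
    have hφ : φ (E.erase a) + #(unpopularPartners T E a) ≤ φ E :=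
      sum_min_card_distinctReps_erase_add_le T ha (add_subset_add hE hE)
    have hcard : #(E.erase a) + 1 = #E := card_erase_add_one ha
    zify at hφ hcard ⊢
    rw [← hcard] at hErase
    linarith

lemma card_add_le_card_popularSums_add {T β : ℕ} {D E : Finset G} (hDE : D ⊆ E)
    (hβ : ∀ a ∈ D, #(unpopularPartners T E a) ≤ β) :
    #(E + D) ≤ #(popularSums T E) + #D * (β + 1) := by
  have hcover : E + D ⊆ popularSums T E ∪
      D.biUnion fun a => (insert a (unpopularPartners T E a)).image (a + ·) := by
    intro s hs
    obtain ⟨b, hb, a, ha, rfl⟩ := mem_add.1 hs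
    rw [add_comm b a]
    by_cases hpop : b ≠ a ∧ T < #(distinctReps E (a + b))
    · exact mem_union_left _ (mem_filter.2
        ⟨mem_rsumset.2 ⟨a, hDE ha, b, hb, hpop.1.symm, rfl⟩, hpop.2⟩)
    · refine mem_union_right _ (mem_biUnion.2 ⟨a, ha, mem_image_of_mem _ ?_⟩)
      rw [mem_insert, unpopularPartners, mem_filter]
      by_cases hba : b = a
      · exact Or.inl hba
      · exact Or.inr ⟨hb, hba, not_lt.1 fun hT => hpop ⟨hba, hT⟩⟩
  refine (card_le_card hcover).trans ((card_union_le _ _).trans (Nat.add_le_add_left ?_ _))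
  refine card_biUnion_le_card_mul _ _ _ fun a ha => card_image_le.trans ?_
  exact (card_insert_le _ _).trans (Nat.succ_le_succ (hβ a ha))

lemma card_le_card_popularSums_add {T β : ℕ} {E : Finset G}
    (hβ : ∀ a ∈ E, #(unpopularPartners T E a) ≤ β) : #E ≤ #(popularSums T E) + (β + 1) := by
  rcases E.eq_empty_or_nonempty with rfl | ⟨a, ha⟩
  · simp
  have hsub := singleton_subset_iff.2 ha
  have h := card_add_le_card_popularSums_add hsub fun b hb => hβ b (hsub hb)
  rwa [card_add_singleton, card_singleton, one_mul] at h

lemma BddDissociated.card_mul_card_le_card_popularSums {l T β : ℕ} (hl : l ≠ 0) {D E : Finset G}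
    (hEl : #E ≤ 2 ^ l) (hDE : D ⊆ E) (hD : BddDissociated l D)
    (hβ : ∀ a ∈ E, #(unpopularPartners T E a) ≤ β) (hE : 8 * l * (β + 1) ≤ #E) :
    #D * #E ≤ 8 * l * #(popularSums T E) := by
  have hgrowth := hD.card_mul_card_le hl hEl
  have hpop := card_add_le_card_popularSums_add hDE fun a ha => hβ a (hDE ha)
  have hloss : #D * (8 * l * (β + 1)) ≤ #D * #E := Nat.mul_le_mul_left _ hE
  have hscaled := Nat.mul_le_mul_left (4 * l) hpop
  linarith

end Popular

section Sparsify

variable {q : ℕ} [NeZero q]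

/-- Keep the points `a` of `A` at which one of the two coordinates of `w a` vanishes. For random
`w` each point survives with probability at most `2 / q`; two coordinates are used so that the
pairs `(a, s - a)` over all `a` can be controlled by independent events. -/
def sparsify (A : Finset G) (w : G → Fin q × Fin q) : Finset G :=
  {a ∈ A | (w a).1 = 0 ∨ (w a).2 = 0}

lemma dens_filter_fst_or_snd_eq_zero_le {ι : Type*} [Fintype ι] [DecidableEq ι] (i : ι) :
    ({w | (w i).1 = 0 ∨ (w i).2 = 0} : Finset (ι → Fin q × Fin q)).dens ≤ 2 / q := by
  let U : Finset (Fin q × Fin q) := {0} ×ˢ univ ∪ univ ×ˢ {0}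
  have hq : (q : ℚ≥0) ≠ 0 := Nat.cast_ne_zero.2 (NeZero.ne q)
  have hU : #U ≤ 2 * q := by
    refine (card_union_le _ _).trans_eq ?_
    simp only [card_product, card_singleton, card_univ, Fintype.card_fin]
    ring
  calc ({w | (w i).1 = 0 ∨ (w i).2 = 0} : Finset (ι → Fin q × Fin q)).dens
      = ({w | ∀ j ∈ ({i} : Finset ι), w j ∈ U} : Finset (ι → Fin q × Fin q)).dens := by
        simp only [U, mem_singleton, forall_eq, mem_union, mem_product, mem_univ, and_true,
          true_and]
    _ = #U / (q * q : ℕ) := by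
        rw [dens_filter_forall_mem, card_singleton, pow_one, dens, Fintype.card_prod,
          Fintype.card_fin]
    _ ≤ (2 * q : ℕ) / (q * q : ℕ) := by gcongr
    _ = 2 / q := by push_cast; field_simp

lemma dens_filter_notMem_rsumset_sparsify_le [Fintype G] {A : Finset G} {s : G}
    (hs : 3 * q ^ 2 ≤ #(distinctReps A s)) :
    ({w | s ∉ rsumset (sparsify A w)} : Finset (G → Fin q × Fin q)).dens ≤ 1 / 4 := by
  have hinj : Function.Injective fun (w : G → Fin q × Fin q) a => ((w a).1, (w (s - a)).2) := by
    intro w w' h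
    have hcoord (a : G) := Prod.mk.inj (congrFun h a)
    refine funext fun a => Prod.ext (hcoord a).1 ?_
    simpa only [sub_sub_cancel] using (hcoord (s - a)).2
  have hmaps : ∀ w ∈ ({w | s ∉ rsumset (sparsify A w)} : Finset (G → Fin q × Fin q)),
      (fun a => ((w a).1, (w (s - a)).2)) ∈
        ({F | ∀ a ∈ distinctReps A s, F a ∈ ({0}ᶜ : Finset (Fin q × Fin q))} :
          Finset (G → Fin q × Fin q)) := by
    intro w hw
    simp only [mem_filter, mem_univ, true_and, mem_compl, mem_singleton] at hw ⊢
    intro a ha hzero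
    obtain ⟨haA, hsA, hne⟩ := mem_filter.1 ha
    obtain ⟨hfst, hsnd⟩ := Prod.mk.inj hzero
    exact hw (mem_rsumset.2 ⟨a, mem_filter.2 ⟨haA, Or.inl hfst⟩, s - a,
      mem_filter.2 ⟨hsA, Or.inr hsnd⟩, hne, add_sub_cancel a s⟩)
  calc ({w | s ∉ rsumset (sparsify A w)} : Finset (G → Fin q × Fin q)).dens
      ≤ ({F | ∀ a ∈ distinctReps A s, F a ∈ ({0}ᶜ : Finset (Fin q × Fin q))} :
          Finset (G → Fin q × Fin q)).dens := by
        exact div_le_div_of_nonneg_right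
          (Nat.cast_le.2 (card_le_card_of_injOn _ hmaps hinj.injOn)) zero_le
    _ = ({0}ᶜ : Finset (Fin q × Fin q)).dens ^ #(distinctReps A s) := dens_filter_forall_mem _ _
    _ ≤ 1 / 4 := dens_compl_singleton_pow_le 0 (by simpa [sq] using hs)

lemma exists_sparse_subset [Finite G] {A Q : Finset G} (hA : A.Nonempty) (hQ : Q.Nonempty)
    (h : ∀ s ∈ Q, 3 * q ^ 2 ≤ #(distinctReps A s)) :
    ∃ B ⊆ A, #B * q ≤ 4 * #A ∧ #Q ≤ 2 * #(rsumset B) := by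
  cases nonempty_fintype G
  have hkept : 𝔼 w : G → Fin q × Fin q, (#(sparsify A w) : ℚ≥0) ≤ #A * (2 / q) :=
    expect_card_filter_le A _ fun a _ => dens_filter_fst_or_snd_eq_zero_le a
  have hmissed : 𝔼 w : G → Fin q × Fin q,
      (#{s ∈ Q | s ∉ rsumset (sparsify A w)} : ℚ≥0) ≤ #Q * (1 / 4) :=
    expect_card_filter_le Q _ fun s hs => dens_filter_notMem_rsumset_sparsify_le (h s hs)
  have hq : (q : ℚ≥0) ≠ 0 := Nat.cast_ne_zero.2 (NeZero.ne q)
  have hmean : 𝔼 w : G → Fin q × Fin q, (#Q * q * #(sparsify A w) +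
      8 * #A * #{s ∈ Q | s ∉ rsumset (sparsify A w)} : ℚ≥0) ≤ 4 * #A * #Q := by
    rw [expect_add_distrib, ← mul_expect, ← mul_expect]
    calc _ ≤ (#Q * q * (#A * (2 / q)) + 8 * #A * (#Q * (1 / 4)) : ℚ≥0) := by gcongr
      _ = 4 * #A * #Q := by field_simp; ring
  obtain ⟨w, -, hmeanw⟩ := exists_le_of_expect_le univ_nonempty hmean
  have hw : #Q * q * #(sparsify A w) + 8 * #A * #{s ∈ Q | s ∉ rsumset (sparsify A w)} ≤
      4 * #A * #Q := by exact_mod_cast hmeanw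
  refine ⟨sparsify A w, filter_subset _ _, ?_, ?_⟩
  · refine Nat.le_of_mul_le_mul_left ?_ hQ.card_pos
    linarith [(Nat.le_add_right _ _).trans hw]
  · have hfound : #{s ∈ Q | s ∈ rsumset (sparsify A w)} ≤ #(rsumset (sparsify A w)) :=
      card_le_card fun s hs => (mem_filter.1 hs).2
    have hsplit := card_filter_add_card_filter_not (s := Q) (· ∈ rsumset (sparsify A w))
    have hhalf : 2 * #{s ∈ Q | s ∉ rsumset (sparsify A w)} ≤ #Q := by
      refine Nat.le_of_mul_le_mul_left ?_ (Nat.mul_pos four_pos hA.card_pos)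
      linarith [(Nat.le_add_left _ _).trans hw]
    omega

end Sparsify

section Compressible

/-- `B` can be described cheaply, by a small `D` and then a subset of `bddSpan l D`, compared to the
number `#(rsumset B)` of memberships it forces on a set containing `rsumset B`. The weights
`L * (#D + 1)` and `2 * l ^ 2 * #B` are the bits needed for `D` and `B` in a group of order at most
`2 ^ L`, with `L` bits to spare. -/
def Compressible (L l : ℕ) (B : Finset G) : Prop :=
  ∃ D : Finset G, #D < 2 ^ l ∧ B ⊆ bddSpan l D ∧
    L * (#D + 1) + 2 * l ^ 2 * #B ≤ #(rsumset B)

lemma compressible_of_large_doubling {L l : ℕ} (hl : l ≠ 0) {A : Finset G}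
    (hlow : 128 * L * l ≤ #A) (hup : #A < 2 ^ l) (hA : 8 * l ^ 2 * #A ≤ #(A + A)) :
    Compressible L l A := by
  obtain ⟨D, hDA, hD, hspan⟩ := exists_bddDissociated_subset_bddSpan hl A
  refine ⟨D, (card_le_card hDA).trans_lt hup, hspan, ?_⟩
  have hl0 : 0 < l := Nat.pos_of_ne_zero hl
  have hLD : 32 * (L * #D) ≤ #(A + A) := by
    have hgrowth : #D * #A ≤ 4 * l * #(A + D) := hD.card_mul_card_le hl hup.le
    have hsub : #(A + D) ≤ #(A + A) := card_le_card (add_subset_add_left hDA)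
    refine Nat.le_of_mul_le_mul_left ?_ (Nat.mul_pos four_pos hl0)
    calc 4 * l * (32 * (L * #D)) = #D * (128 * L * l) := by ring
      _ ≤ #D * #A := Nat.mul_le_mul_left _ hlow
      _ ≤ 4 * l * #(A + A) := hgrowth.trans (Nat.mul_le_mul_left _ hsub)
  have hL : L ≤ #A := (Nat.le_mul_of_pos_right L (Nat.mul_pos (by norm_num) hl0)).trans
    ((by ring : L * (128 * l) = 128 * L * l).trans_le hlow)
  have hA8 : 8 * #A ≤ 8 * l ^ 2 * #A := by
    gcongr
    exact Nat.le_mul_of_pos_right 8 (pow_pos hl0 2)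
  have hrsum := card_add_self_le_card_rsumset_add_card A
  linarith

lemma exists_compressible_subset_of_card_unpopularPartners_le [Finite G] {L l β : ℕ} (hl : l ≠ 0)
    {E : Finset G} (hlow : 64 * L * l ≤ #E) (hup : #E < 2 ^ l) (hβ : 8 * l * (β + 1) ≤ #E)
    (hpartners : ∀ a ∈ E, #(unpopularPartners (3 * (64 * l ^ 2) ^ 2) E a) ≤ β) :
    ∃ B ⊆ E, Compressible L l B := by
  have hl0 : 0 < l := Nat.pos_of_ne_zero hl
  have : NeZero (64 * l ^ 2) := ⟨by positivity⟩
  obtain ⟨D, hDE, hD, hspan⟩ := exists_bddDissociated_subset_bddSpan hl E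
  let Q := popularSums (3 * (64 * l ^ 2) ^ 2) E
  have hLD : 8 * (L * #D) ≤ #Q := by
    have hDQ := hD.card_mul_card_le_card_popularSums hl hup.le hDE hpartners hβ
    refine Nat.le_of_mul_le_mul_left ?_ (Nat.mul_pos (by norm_num : 0 < 8) hl0)
    calc 8 * l * (8 * (L * #D)) = #D * (64 * L * l) := by ring
      _ ≤ #D * #E := Nat.mul_le_mul_left _ hlow
      _ ≤ 8 * l * #Q := hDQ
  have hLE : 64 * L ≤ #E := (Nat.le_mul_of_pos_right _ hl0).trans hlow
  have hβE : 8 * (β + 1) ≤ #E :=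
    (Nat.mul_le_mul_right _ (Nat.le_mul_of_pos_right 8 hl0)).trans hβ
  have hEQ : #E ≤ 2 * #Q := by
    have hQ : #E ≤ #Q + (β + 1) := card_le_card_popularSums_add hpartners
    omega
  have hE : E.Nonempty := card_pos.1 (by omega)
  obtain ⟨B, hBE, hBsmall, hBlarge⟩ := exists_sparse_subset (q := 64 * l ^ 2) (Q := Q) hE
    (card_pos.1 (by omega)) fun s hs => (mem_filter.1 hs).2.le
  refine ⟨B, hBE, D, (card_le_card hDE).trans_lt hup, hBE.trans hspan, ?_⟩
  have hB : 16 * (l ^ 2 * #B) ≤ #E := by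
    have : #B * (64 * l ^ 2) = 64 * (l ^ 2 * #B) := by ring
    omega
  linarith only [hB, hBlarge, hLD, hLE, hEQ]

lemma exists_compressible_subset_of_small_doubling [Finite G] {L l : ℕ} (hl : l ≠ 0)
    (hL : 2 ^ 15 * l ^ 6 ≤ L) {A : Finset G} (hlow : 128 * L * l ≤ #A) (hup : #A < 2 ^ l)
    (hA : #(A + A) ≤ 8 * l ^ 2 * #A) : ∃ B ⊆ A, Compressible L l B := by
  have hl6 : 0 < l ^ 6 := pow_pos (Nat.pos_of_ne_zero hl) 6
  let T := 3 * (64 * l ^ 2) ^ 2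
  let β := 2 * T * (8 * l ^ 2)
  have hβ : β = 196608 * l ^ 6 := by ring
  obtain ⟨E, hEA, hAE, hpartners⟩ := exists_subset_card_unpopularPartners_le A
    (T := T) (β := β) (by omega) ((Nat.mul_le_mul_left _ hA).trans_eq (mul_assoc _ _ _).symm)
  have hElow : 64 * L * l ≤ #E := by linarith
  have hβE : 8 * l * (β + 1) ≤ #E :=
    calc 8 * l * (β + 1) ≤ 8 * l * (8 * L) := Nat.mul_le_mul_left _ (by omega)
      _ = 64 * L * l := by ring
      _ ≤ #E := hElow
  obtain ⟨B, hBE, hB⟩ := exists_compressible_subset_of_card_unpopularPartners_le hl hElow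
    ((card_le_card hEA).trans_lt hup) hβE hpartners
  exact ⟨B, hBE.trans hEA, hB⟩

theorem exists_compressible_subset [Finite G] {L l : ℕ} (hl : l ≠ 0) (hL : 2 ^ 15 * l ^ 6 ≤ L)
    {A : Finset G} (hlow : 128 * L * l ≤ #A) (hup : #A < 2 ^ l) :
    ∃ B ⊆ A, Compressible L l B := by
  rcases le_total (8 * l ^ 2 * #A) #(A + A) with hA | hA
  · exact ⟨A, Subset.rfl, compressible_of_large_doubling hl hlow hup hA⟩
  · exact exists_compressible_subset_of_small_doubling hl hL hlow hup hA

end Compressible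

section UnionBound

lemma card_filter_superset_le {α : Type*} [Fintype α] [DecidableEq α] {U : Finset α} {x : ℕ}
    (hx : x ≤ #U) :
    (#{S : Finset α | U ⊆ S} : ℝ) ≤ 2 ^ Fintype.card α * (1 / 2) ^ x := by
  have hIcc : ({S : Finset α | U ⊆ S} : Finset (Finset α)) = Icc U univ := by
    ext S
    simp only [mem_filter, mem_univ, true_and, mem_Icc, subset_univ, and_true]
  rw [hIcc, card_Icc_finset (subset_univ U), card_univ, Nat.cast_pow, Nat.cast_ofNat,
    one_div, inv_pow, ← div_eq_mul_inv, le_div_iff₀ (by positivity), ← pow_add]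
  have hU := card_le_univ U
  exact pow_le_pow_right₀ one_le_two (by omega)

lemma card_bddSpan_mul_le_one {l : ℕ} {D : Finset G} (hD : #D < 2 ^ l) :
    (#(bddSpan l D) : ℝ) * (1 / 2) ^ (2 * l ^ 2) ≤ 1 := by
  have hcard : #(bddSpan l D) ≤ 2 ^ (2 * l ^ 2) :=
    calc #(bddSpan l D) ≤ (#D + 1) ^ (2 * l) := card_bddSpan_le l D
      _ ≤ (2 ^ l) ^ (2 * l) := Nat.pow_le_pow_left hD _
      _ = 2 ^ (2 * l ^ 2) := by rw [← pow_mul]; congr 1; ring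
  rw [one_div, inv_pow, ← div_eq_mul_inv, div_le_one (by positivity)]
  exact_mod_cast hcard

variable [Fintype G]

lemma sum_compressible_weight_le {L l : ℕ} (hL : Fintype.card G ≤ 2 ^ L) :
    ∑ D : Finset G with #D < 2 ^ l, ∑ B ∈ (bddSpan l D).powerset,
      (1 / 2 : ℝ) ^ (L * (#D + 1) + 2 * l ^ 2 * #B) ≤ 8 / 2 ^ L := by
  have hfactor (d b : ℕ) : (1 / 2 : ℝ) ^ (L * (d + 1) + 2 * l ^ 2 * b) =
      (1 / 2) ^ L * (((1 / 2) ^ L) ^ d * ((1 / 2) ^ (2 * l ^ 2)) ^ b) := by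
    rw [← pow_mul, ← pow_mul, ← pow_add, ← pow_add]
    congr 1
    ring
  have hinner (D : Finset G) (hD : #D < 2 ^ l) :
      ∑ B ∈ (bddSpan l D).powerset, ((1 / 2 : ℝ) ^ (2 * l ^ 2)) ^ #B ≤ Real.exp 1 :=
    (sum_powerset_pow_card_le_exp _ (by positivity)).trans
      (Real.exp_le_exp.2 (card_bddSpan_mul_le_one hD))
  have houter : ∑ D : Finset G with #D < 2 ^ l, ((1 / 2 : ℝ) ^ L) ^ #D ≤ Real.exp 1 := by
    have hcard : (#(univ : Finset G) : ℝ) * (1 / 2) ^ L ≤ 1 := by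
      rw [one_div, inv_pow, ← div_eq_mul_inv, div_le_one (by positivity)]
      exact_mod_cast hL
    refine le_trans (sum_le_sum_of_subset_of_nonneg (fun D _ => mem_powerset.2 (subset_univ D))
      fun D _ _ => by positivity) ?_
    exact (sum_powerset_pow_card_le_exp univ (by positivity)).trans (Real.exp_le_exp.2 hcard)
  have hexp : Real.exp 1 * Real.exp 1 ≤ 8 := by
    nlinarith [Real.exp_one_lt_d9, Real.exp_pos 1]
  simp_rw [hfactor, ← mul_sum]
  calc (1 / 2 : ℝ) ^ L * ∑ D : Finset G with #D < 2 ^ l,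
        ((1 / 2) ^ L) ^ #D * ∑ B ∈ (bddSpan l D).powerset, ((1 / 2) ^ (2 * l ^ 2)) ^ #B
      ≤ (1 / 2) ^ L * ∑ D : Finset G with #D < 2 ^ l, ((1 / 2) ^ L) ^ #D * Real.exp 1 := by
        gcongr with D hD
        exact hinner D (mem_filter.1 hD).2
    _ ≤ (1 / 2) ^ L * (Real.exp 1 * Real.exp 1) := by
        rw [← sum_mul]
        gcongr
    _ ≤ (1 / 2) ^ L * 8 := by gcongr
    _ = 8 / 2 ^ L := by rw [one_div, inv_pow]; ring

lemma card_le_of_forall_exists_compressible {L l : ℕ} (hL : Fintype.card G ≤ 2 ^ L)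
    {F : Finset (Finset G)} (hF : ∀ S ∈ F, ∃ B, Compressible L l B ∧ rsumset B ⊆ S) :
    (#F : ℝ) ≤ 8 * 2 ^ Fintype.card G / 2 ^ L := by
  let cost (D B : Finset G) : ℕ := L * (#D + 1) + 2 * l ^ 2 * #B
  have hcover : F ⊆ ({D : Finset G | #D < 2 ^ l} : Finset (Finset G)).biUnion fun D =>
      {B ∈ (bddSpan l D).powerset | cost D B ≤ #(rsumset B)}.biUnion fun B =>
        {S | rsumset B ⊆ S} := by
    intro S hS
    obtain ⟨B, ⟨D, hD, hBD, hcost⟩, hBS⟩ := hF S hS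
    simp only [mem_biUnion, mem_filter, mem_univ, true_and, mem_powerset]
    exact ⟨D, hD, B, ⟨hBD, hcost⟩, hBS⟩
  have hcard : #F ≤ ∑ D : Finset G with #D < 2 ^ l,
      ∑ B ∈ (bddSpan l D).powerset with cost D B ≤ #(rsumset B),
        #{S : Finset G | rsumset B ⊆ S} :=
    (card_le_card hcover).trans (card_biUnion_le.trans (sum_le_sum fun D _ => card_biUnion_le))
  calc (#F : ℝ)
      ≤ ∑ D : Finset G with #D < 2 ^ l,
          ∑ B ∈ (bddSpan l D).powerset with cost D B ≤ #(rsumset B),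
            (#{S : Finset G | rsumset B ⊆ S} : ℝ) := by exact_mod_cast hcard
    _ ≤ ∑ D : Finset G with #D < 2 ^ l, ∑ B ∈ (bddSpan l D).powerset,
          2 ^ Fintype.card G * (1 / 2 : ℝ) ^ cost D B := by
        refine sum_le_sum fun D _ => ?_
        refine (sum_le_sum fun B hB => card_filter_superset_le (mem_filter.1 hB).2).trans ?_
        exact sum_le_sum_of_subset_of_nonneg (filter_subset _ _) fun B _ _ => by positivity
    _ ≤ 2 ^ Fintype.card G * (8 / 2 ^ L) := by
        simp_rw [← mul_sum]
        gcongr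
        exact sum_compressible_weight_le hL
    _ = 8 * 2 ^ Fintype.card G / 2 ^ L := by ring

end UnionBound

section Unions

/-- The sets that are unions of at most `m₀` restricted sumsets. -/
def rsumsetUnions (m₀ : ℕ) : Set (Finset G) :=
  {S | ∃ m ≤ m₀, ∃ A : Fin m → Finset G, S = univ.sup fun i => rsumset (A i)}

variable [Fintype G]

/-- The unions of at most `m` restricted sumsets of sets with at most `k` elements. -/
def smallRsumsetUnions (k m : ℕ) : Finset (Finset G) :=
  {F ∈ ({A | #A ≤ k} : Finset (Finset G)).powerset | #F ≤ m}.image fun F => F.sup rsumset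

lemma card_smallRsumsetUnions_le {L : ℕ} (hL : Fintype.card G ≤ 2 ^ L) (k m : ℕ) :
    #(smallRsumsetUnions k m : Finset (Finset G)) ≤ 2 ^ (((L + 1) * k + 1) * m) := by
  have hsets : #{A : Finset G | #A ≤ k} ≤ 2 ^ ((L + 1) * k) :=
    calc #{A : Finset G | #A ≤ k} ≤ (Fintype.card G + 1) ^ k := by
          simpa using card_filter_powerset_card_le (univ : Finset G) k
      _ ≤ (2 ^ (L + 1)) ^ k := by
          gcongr
          have := Nat.one_le_two_pow (n := L)
          omega
      _ = 2 ^ ((L + 1) * k) := (pow_mul _ _ _).symm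
  have hone := Nat.one_le_two_pow (n := (L + 1) * k)
  refine card_image_le.trans ((card_filter_powerset_card_le _ _).trans ?_)
  rw [pow_mul]
  gcongr
  omega

lemma exists_rsumset_subset_or_mem_smallRsumsetUnions {m : ℕ} {S : Finset G}
    (hS : S ∈ rsumsetUnions m) (k : ℕ) :
    (∃ A : Finset G, #A = k ∧ rsumset A ⊆ S) ∨ S ∈ smallRsumsetUnions k m := by
  obtain ⟨m', hm', A, rfl⟩ := hS
  by_cases hbig : ∃ i, k ≤ #(A i)
  · obtain ⟨i, hi⟩ := hbig
    obtain ⟨A', hA'A, hA'⟩ := exists_subset_card_eq hi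
    have hsup : rsumset (A i) ⊆ univ.sup fun i => rsumset (A i) :=
      le_sup (f := fun i => rsumset (A i)) (mem_univ i)
    exact Or.inl ⟨A', hA', (rsumset_mono hA'A).trans hsup⟩
  · push Not at hbig
    refine Or.inr (mem_image.2 ⟨univ.image A, mem_filter.2 ⟨?_, ?_⟩, sup_image _ _ _⟩)
    · simpa [subset_iff] using fun i => (hbig i).le
    · exact card_image_le.trans (by simpa using hm')

theorem ncard_rsumsetUnions_le {L l m : ℕ} (hN : Fintype.card G ≤ 2 ^ L) (hl : l ≠ 0)
    (hL : 2 ^ 15 * l ^ 6 ≤ L) (hk : 128 * L * l < 2 ^ l)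
    (hm : ((L + 1) * (128 * L * l) + 1) * m + L ≤ Fintype.card G) :
    ((rsumsetUnions m : Set (Finset G)).ncard : ℝ) ≤ 9 * 2 ^ Fintype.card G / 2 ^ L := by
  classical
  let P : Finset (Finset G) := {S | ∃ B, Compressible L l B ∧ rsumset B ⊆ S}
  let R : Finset (Finset G) := smallRsumsetUnions (128 * L * l) m
  have hcover : (rsumsetUnions m : Set (Finset G)) ⊆ ((P ∪ R : Finset (Finset G)) : Set _) := by
    intro S hS
    rw [mem_coe, mem_union]
    refine (exists_rsumset_subset_or_mem_smallRsumsetUnions hS _).imp_left ?_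
    rintro ⟨A, hA, hAS⟩
    obtain ⟨B, hBA, hB⟩ := exists_compressible_subset hl hL hA.ge (hA.trans_lt hk)
    exact mem_filter.2 ⟨mem_univ S, B, hB, (rsumset_mono hBA).trans hAS⟩
  have hP : (#P : ℝ) ≤ 8 * 2 ^ Fintype.card G / 2 ^ L :=
    card_le_of_forall_exists_compressible hN fun S hS => (mem_filter.1 hS).2
  have hR : (#R : ℝ) ≤ 2 ^ Fintype.card G / 2 ^ L := by
    rw [le_div_iff₀ (by positivity)]
    have hcount : #R * 2 ^ L ≤ 2 ^ Fintype.card G :=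
      calc #R * 2 ^ L ≤ 2 ^ (((L + 1) * (128 * L * l) + 1) * m) * 2 ^ L :=
            Nat.mul_le_mul_right _ (card_smallRsumsetUnions_le hN _ m)
        _ = 2 ^ (((L + 1) * (128 * L * l) + 1) * m + L) := (pow_add _ _ _).symm
        _ ≤ 2 ^ Fintype.card G := Nat.pow_le_pow_right two_pos hm
    exact_mod_cast hcount
  calc ((rsumsetUnions m : Set (Finset G)).ncard : ℝ)
      ≤ #(P ∪ R) := by
        rw [← Set.ncard_coe_finset]
        exact_mod_cast Set.ncard_le_ncard hcover (finite_toSet _)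
    _ ≤ #P + #R := by exact_mod_cast card_union_le P R
    _ ≤ 8 * 2 ^ Fintype.card G / 2 ^ L + 2 ^ Fintype.card G / 2 ^ L := add_le_add hP hR
    _ = 9 * 2 ^ Fintype.card G / 2 ^ L := by ring

end Unions

section Numerics

lemma tendsto_clog_atTop {b : ℕ} (hb : 1 < b) : Tendsto (Nat.clog b) atTop atTop :=
  tendsto_atTop_atTop_of_monotone (Nat.clog_monotone b) fun n => ⟨b ^ n, (Nat.clog_pow b n hb).ge⟩

lemma eventually_mul_pow_le_two_pow (C k : ℕ) : ∀ᶠ n : ℕ in atTop, C * n ^ k ≤ 2 ^ n := by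
  have hlim := tendsto_pow_const_div_const_pow_of_one_lt k (one_lt_two (α := ℝ))
  filter_upwards [hlim.eventually_le_const (u := 1 / (C + 1 : ℝ)) (by positivity)] with n hn
  rw [div_le_div_iff₀ (by positivity) (by positivity), one_mul] at hn
  have hle : (C * n ^ k : ℝ) ≤ 2 ^ n := by linarith [pow_nonneg (Nat.cast_nonneg (α := ℝ) n) k]
  exact_mod_cast hle

lemma logb_le_natCast_clog (b n : ℕ) : Real.logb b n ≤ Nat.clog b n := by
  rw [← Real.natCeil_logb_natCast]
  exact Nat.le_ceil _

lemma natCast_clog_lt_logb_add_one {b : ℕ} (hb : 1 < b) (n : ℕ) :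
    (Nat.clog b n : ℝ) < Real.logb b n + 1 := by
  have hlog : 0 ≤ Real.logb b n :=
    div_nonneg (Real.log_natCast_nonneg n) (Real.log_nonneg (by exact_mod_cast hb.le))
  rw [← Real.natCeil_logb_natCast]
  exact Nat.ceil_lt_add_one hlog

lemma natCast_clog_clog_lt {b N : ℕ} (hb : 1 < b) (hN : 1 ≤ Real.logb b N) :
    (Nat.clog b (Nat.clog b N) : ℝ) < Real.logb b (Real.logb b N) + 2 := by
  have hb' : (1 : ℝ) < b := by exact_mod_cast hb
  have hb2 : (2 : ℝ) ≤ b := by exact_mod_cast hb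
  have hlow := logb_le_natCast_clog b N
  have hup := natCast_clog_lt_logb_add_one hb N
  have hlog : Real.logb b (Nat.clog b N) ≤ Real.logb b (Real.logb b N) + 1 := by
    rw [← Real.logb_self_eq_one hb', ← Real.logb_mul (by linarith) (by linarith)]
    exact Real.logb_le_logb_of_le hb' (by linarith) (by nlinarith)
  linarith [natCast_clog_lt_logb_add_one hb (Nat.clog b N)]

lemma mul_floor_add_clog_le {N : ℕ} (hn : 1000 ≤ Real.logb 2 N) (hLN : 2 * Nat.clog 2 N ≤ N) :
    ((Nat.clog 2 N + 1) * (256 * Nat.clog 2 N * Nat.clog 2 (Nat.clog 2 N)) + 1) *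
      ⌊(1 / 2000 : ℝ) * N / (Real.logb 2 N ^ 2 * Real.logb 2 (Real.logb 2 N))⌋₊ +
      Nat.clog 2 N ≤ N := by
  have hLn := natCast_clog_lt_logb_add_one one_lt_two N
  have hvq := natCast_clog_clog_lt one_lt_two (N := N) (by push_cast; linarith)
  push_cast at hLn hvq
  set L := Nat.clog 2 N
  set v := Nat.clog 2 L
  set n := Real.logb 2 N
  set q := Real.logb 2 n with hqdef
  have hq : 4 ≤ q := by
    rw [hqdef, Real.le_logb_iff_rpow_le one_lt_two (by linarith)]
    norm_num
    linarith
  have hcoef : ((L : ℝ) + 1) * (256 * L * v) + 1 ≤ 1000 * (n ^ 2 * q) := by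
    have hprod : ((L : ℝ) + 1) * (256 * L * v) ≤ (1.01 * n) * (256 * (1.01 * n) * (2 * q)) := by
      gcongr <;> linarith
    nlinarith
  have hfloor : (⌊(1 / 2000 : ℝ) * N / (n ^ 2 * q)⌋₊ : ℝ) ≤ (1 / 2000 : ℝ) * N / (n ^ 2 * q) :=
    Nat.floor_le (by positivity)
  have hhalf : (((L : ℝ) + 1) * (256 * L * v) + 1) *
      ⌊(1 / 2000 : ℝ) * N / (n ^ 2 * q)⌋₊ ≤ N / 2 :=
    calc _ ≤ 1000 * (n ^ 2 * q) * ((1 / 2000 : ℝ) * N / (n ^ 2 * q)) := by gcongr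
      _ = N / 2 := by field_simp; ring
  have hLN' : 2 * (L : ℝ) ≤ N := by exact_mod_cast hLN
  have hsum : (((L : ℝ) + 1) * (256 * L * v) + 1) *
      ⌊(1 / 2000 : ℝ) * N / (n ^ 2 * q)⌋₊ + L ≤ N := by linarith
  exact_mod_cast hsum

lemma eventually_exists_parameters : ∀ᶠ N : ℕ in atTop, ∃ L l : ℕ,
    N ≤ 2 ^ L ∧ l ≠ 0 ∧ 2 ^ 15 * l ^ 6 ≤ L ∧ 128 * L * l < 2 ^ l ∧
      ((L + 1) * (128 * L * l) + 1) *
        ⌊(1 / 2000 : ℝ) * N / (Real.logb 2 N ^ 2 * Real.logb 2 (Real.logb 2 N))⌋₊ + L ≤ N := by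
  have hclog := tendsto_clog_atTop one_lt_two
  filter_upwards [(Real.tendsto_logb_atTop one_lt_two).comp tendsto_natCast_atTop_atTop
      |>.eventually_ge_atTop 1000,
    hclog.eventually (eventually_mul_pow_le_two_pow 4 1), hclog.eventually_gt_atTop 1,
    hclog.eventually (hclog.eventually (eventually_mul_pow_le_two_pow (2 ^ 22) 6)),
    hclog.eventually (hclog.eventually_gt_atTop 0), eventually_gt_atTop 1]
    with N hlogN hL4 hL1 hv6 hv0 hN1
  have hN := Nat.pow_pred_clog_lt_self one_lt_two hN1
  have hL := Nat.pow_pred_clog_lt_self one_lt_two hL1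
  have hLv := Nat.le_pow_clog one_lt_two (Nat.clog 2 N)
  have hfinal := mul_floor_add_clog_le hlogN
  have hNL := Nat.le_pow_clog one_lt_two N
  simp only [Nat.pred_eq_sub_one, pow_one] at hN hL hL4
  generalize Nat.clog 2 N = L at *
  generalize Nat.clog 2 L = v at *
  have hL2 : 2 ^ L = 2 * 2 ^ (L - 1) := by rw [← pow_succ', Nat.sub_add_cancel hL1.le]
  have hv2 : 2 ^ v = 2 * 2 ^ (v - 1) := by rw [← pow_succ', Nat.sub_add_cancel hv0]
  have hvpow : v ≤ v ^ 6 := Nat.le_self_pow (by norm_num) v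
  have hv256 : 256 * v < 2 ^ v := by omega
  refine ⟨L, 2 * v, hNL, by omega, ?_, ?_, ?_⟩
  · rw [mul_pow]
    omega
  · calc 128 * L * (2 * v) = L * (256 * v) := by ring
      _ < 2 ^ v * 2 ^ v := Nat.mul_lt_mul_of_le_of_lt hLv hv256 (by positivity)
      _ = 2 ^ (2 * v) := by rw [two_mul, pow_add]
  · rw [show 128 * L * (2 * v) = 256 * L * v by ring]
    exact hfinal (by omega)

end Numerics

theorem random_set_not_union_of_few_sumsets_general :
    ∃ N₀ : ℕ, ∀ (G : Type*) [AddCommGroup G] [Fintype G] [DecidableEq G],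
      N₀ ≤ Fintype.card G →
      ((rsumsetUnions ⌊(1 / 2000 : ℝ) * (Fintype.card G : ℝ) /
          (Real.logb 2 (Fintype.card G) ^ 2 *
            Real.logb 2 (Real.logb 2 (Fintype.card G)))⌋₊ : Set (Finset G)).ncard : ℝ) /
        2 ^ Fintype.card G ≤ 9 / Fintype.card G := by
  obtain ⟨N₀, hN₀⟩ := eventually_atTop.1 eventually_exists_parameters
  refine ⟨N₀, fun G _ _ _ hG => ?_⟩
  obtain ⟨L, l, hN, hl, hL, hk, hm⟩ := hN₀ _ hG
  have hcount := ncard_rsumsetUnions_le hN hl hL hk hm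
  rw [div_le_iff₀ (by positivity)]
  calc _ ≤ 9 * 2 ^ Fintype.card G / 2 ^ L := hcount
    _ ≤ 9 * 2 ^ Fintype.card G / (Fintype.card G : ℝ) := by
        gcongr
        exact_mod_cast hN
    _ = 9 / Fintype.card G * 2 ^ Fintype.card G := by ring

/-- There is a constant `c > 0` such that for every `ε > 0` there is `N₀` such
that for every finite abelian group `G` of order `N ≥ N₀`, a uniformly random
subset of `G` can be expressed as a union of at most
`⌊c·N / ((log₂ N)²·log₂ log₂ N)⌋` restricted sumsets with probability at most `ε`. -/
theorem random_set_not_union_of_few_sumsets :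
    ∃ c : ℝ, 0 < c ∧ ∀ ε : ℝ, 0 < ε → ∃ N₀ : ℕ,
      ∀ (G : Type) [AddCommGroup G] [Fintype G] [DecidableEq G],
        N₀ ≤ Fintype.card G →
        ({S : Finset G | ∃ m : ℕ,
            m ≤ ⌊c * (Fintype.card G : ℝ) /
                ((Real.logb 2 (Fintype.card G)) ^ 2 *
                  Real.logb 2 (Real.logb 2 (Fintype.card G)))⌋₊ ∧
            ∃ A : Fin m → Finset G,
              S = Finset.univ.sup fun i => rsumset (A i)}.ncard : ℝ) /
          2 ^ (Fintype.card G) ≤ ε := by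
  obtain ⟨N₀, hN₀⟩ := random_set_not_union_of_few_sumsets_general
  refine ⟨1 / 2000, by norm_num, fun ε hε => ⟨max N₀ ⌈9 / ε⌉₊, fun G _ _ _ hG => ?_⟩⟩
  refine (hN₀ G (le_of_max_le_left hG)).trans ((div_le_comm₀ ?_ hε).2 ?_)
  · exact_mod_cast Fintype.card_pos
  · exact Nat.ceil_le.1 (le_of_max_le_right hG)
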